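/- arXiv:1907.07047 — 2 statements merged into one kernel-verified Lean document; each statement's English description precedes it below -/
import Mathlib

section
/- Let S be a semiring and let L →f M →g N be S-linear maps of S-semimodules. The following are equivalent: (1) the sequence 0 → L →f M →g N → 0 is a short exact sequence (f injective, f(L) = ker g, g surjective and k-normal); (2) f is injective with f(L) = ker g, g is surjective, and for all m, m' ∈ M one has g(m) = g(m') if and only if there exist l, l' ∈ L with m + f(l) = m' + f(l'); (3) f is injective, f(L) = ker g, and g is surjective and normal. Moreover, in this case both f and g are normal morphisms. -/
open TensorProduct

section Defs

/-- An `S`-linear map `f` is *k-normal* if whenever `f m = f m'` there exist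
`k, k' ∈ ker f` with `m + k = m' + k'`. -/
def KNormal {S : Type*} [Semiring S] {L M : Type*} [AddCommMonoid L] [AddCommMonoid M]
    [Module S L] [Module S M] (f : L →ₗ[S] M) : Prop :=
  ∀ m m' : L, f m = f m' → ∃ k k' : L, f k = 0 ∧ f k' = 0 ∧ m + k = m' + k'

/-- An `S`-linear map `f` is *i-normal* if whenever `m + f l = f l'` then `m` is in the
image of `f`. -/
def INormal {S : Type*} [Semiring S] {L M : Type*} [AddCommMonoid L] [AddCommMonoid M]
    [Module S L] [Module S M] (f : L →ₗ[S] M) : Prop :=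
  ∀ (m : M) (l l' : L), m + f l = f l' → ∃ x : L, f x = m

/-- An `S`-linear map is *normal* if it is both k-normal and i-normal. -/
def IsNormalMap {S : Type*} [Semiring S] {L M : Type*} [AddCommMonoid L] [AddCommMonoid M]
    [Module S L] [Module S M] (f : L →ₗ[S] M) : Prop :=
  KNormal f ∧ INormal f

/-- A sequence `L →f M →g N` is *exact* (in the sense of Abuhlail) if `g` is k-normal and
`f(L) = ker g`. -/
def IsExactSeq {S : Type*} [Semiring S] {L M N : Type*}
    [AddCommMonoid L] [AddCommMonoid M] [AddCommMonoid N]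
    [Module S L] [Module S M] [Module S N]
    (f : L →ₗ[S] M) (g : M →ₗ[S] N) : Prop :=
  KNormal g ∧ ∀ m : M, g m = 0 ↔ ∃ l : L, f l = m

/-- A sequence `L →f M →g N` is *semi-exact* if the subtractive closure of `f(L)`
equals `ker g`. -/
def IsSemiExactSeq {S : Type*} [Semiring S] {L M N : Type*}
    [AddCommMonoid L] [AddCommMonoid M] [AddCommMonoid N]
    [Module S L] [Module S M] [Module S N]
    (f : L →ₗ[S] M) (g : M →ₗ[S] N) : Prop :=
  ∀ m : M, g m = 0 ↔ ∃ l l' : L, m + f l = f l'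

/-- `0 → L →f M →g N → 0` is a *short exact sequence*: `f` is injective, `f(L) = ker g`,
and `g` is surjective and k-normal. -/
def IsShortExactSeq {S : Type*} [Semiring S] {L M N : Type*}
    [AddCommMonoid L] [AddCommMonoid M] [AddCommMonoid N]
    [Module S L] [Module S M] [Module S N]
    (f : L →ₗ[S] M) (g : M →ₗ[S] N) : Prop :=
  Function.Injective f ∧ (∀ m : M, g m = 0 ↔ ∃ l : L, f l = m) ∧
    Function.Surjective g ∧ KNormal g

/-- A subset `T` of an additive commutative monoid is *subtractive* if
`m + l ∈ T` and `l ∈ T` imply `m ∈ T`. -/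
def SubtractiveSet {M : Type*} [AddCommMonoid M] (T : Set M) : Prop :=
  ∀ m l : M, m + l ∈ T → l ∈ T → m ∈ T

/-- `F` is `M`-m-flat: for every submodule `L ≤ M`, `id_F ⊗ ι_L` is injective. -/
def MMFlat (S : Type*) [CommSemiring S] (F M : Type*) [AddCommMonoid F] [AddCommMonoid M]
    [Module S F] [Module S M] : Prop :=
  ∀ L : Submodule S M, Function.Injective (LinearMap.lTensor F L.subtype)

/-- `F` is `M`-i-flat: for every subtractive submodule `L ≤ M`, `id_F ⊗ ι_L` is injective. -/
def MIFlat (S : Type*) [CommSemiring S] (F M : Type*) [AddCommMonoid F] [AddCommMonoid M]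
    [Module S F] [Module S M] : Prop :=
  ∀ L : Submodule S M, SubtractiveSet (L : Set M) →
    Function.Injective (LinearMap.lTensor F L.subtype)

/-- `F` is `M`-e-flat (normally `M`-flat): for every subtractive submodule `L ≤ M`,
`id_F ⊗ ι_L` is injective with subtractive image. -/
def MEFlat (S : Type*) [CommSemiring S] (F M : Type*) [AddCommMonoid F] [AddCommMonoid M]
    [Module S F] [Module S M] : Prop :=
  ∀ L : Submodule S M, SubtractiveSet (L : Set M) →
    Function.Injective (LinearMap.lTensor F L.subtype) ∧
      SubtractiveSet (Set.range (LinearMap.lTensor F L.subtype))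

/-- `F` is *e-flat*: `F ⊗ -` preserves short exact sequences. -/
def EFlat (S : Type*) [CommSemiring S] (F : Type*) [AddCommMonoid F] [Module S F] : Prop :=
  ∀ (L M N : Type*) [AddCommMonoid L] [AddCommMonoid M] [AddCommMonoid N]
    [Module S L] [Module S M] [Module S N] (f : L →ₗ[S] M) (g : M →ₗ[S] N),
    IsShortExactSeq f g →
      IsShortExactSeq (LinearMap.lTensor F f) (LinearMap.lTensor F g)

/-- `F` is *m-flat*: `F` is `M`-m-flat for every `S`-semimodule `M`. -/
def MFlatAll (S : Type*) [CommSemiring S] (F : Type*) [AddCommMonoid F] [Module S F] : Prop :=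
  ∀ (M : Type*) [AddCommMonoid M] [Module S M] (L : Submodule S M),
    Function.Injective (LinearMap.lTensor F L.subtype)

/-- `A` is `S`-m-flat. -/
def SMFlat (S : Type*) [CommSemiring S] (A : Type*) [AddCommMonoid A] [Module S A] : Prop :=
  ∀ I : Submodule S S, Function.Injective (LinearMap.lTensor A I.subtype)

/-- `A` is `S`-i-flat. -/
def SIFlat (S : Type*) [CommSemiring S] (A : Type*) [AddCommMonoid A] [Module S A] : Prop :=
  ∀ I : Submodule S S, SubtractiveSet (I : Set S) →
    Function.Injective (LinearMap.lTensor A I.subtype)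

/-- `A` is `S`-e-flat. -/
def SEFlat (S : Type*) [CommSemiring S] (A : Type*) [AddCommMonoid A] [Module S A] : Prop :=
  ∀ I : Submodule S S, SubtractiveSet (I : Set S) →
    Function.Injective (LinearMap.lTensor A I.subtype) ∧
      SubtractiveSet (Set.range (LinearMap.lTensor A I.subtype))

/-- The canonical map `θ_I : A ⊗[S] I → A`, `a ⊗ i ↦ i • a`. -/
noncomputable def thetaI (S : Type*) [CommSemiring S] (A : Type*) [AddCommMonoid A] [Module S A]
    (I : Submodule S S) : TensorProduct S A I →ₗ[S] A :=
  (TensorProduct.rid S A).toLinearMap ∘ₗ LinearMap.lTensor A I.subtype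

end Defs

/-!
Surjective maps are i-normal and injective maps are k-normal, so normality of `f` and `g` reduces to
i-normality of `f` and k-normality of `g`. The former is automatic: i-normality says that the image
is subtractive, and `f(L)` is the kernel of `g`. For the latter, `g` always identifies elements that
agree up to adding elements of `ker g`, so k-normality says that this describes exactly the relation
`g m = g m'`, and since `ker g = f(L)` the added elements may be taken of the form `f l`.
-/

open Function

theorem map_eq_map_of_add_eq_add {F M N : Type*} [AddZeroClass M] [AddZeroClass N] [FunLike F M N]
    [AddMonoidHomClass F M N] {g : F} {m m' k k' : M} (hk : g k = 0) (hk' : g k' = 0)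
    (h : m + k = m' + k') : g m = g m' := by
  simpa only [map_add, hk, hk', add_zero] using congrArg g h

theorem exists_ker_add_eq_iff_of_exact {L M N : Type*} [Add M] [Zero N] {f : L → M} {g : M → N}
    (h : Exact f g) {m m' : M} :
    (∃ k k' : M, g k = 0 ∧ g k' = 0 ∧ m + k = m' + k') ↔ ∃ l l' : L, m + f l = m' + f l' := by
  constructor
  · rintro ⟨k, k', hk, hk', hkk'⟩
    obtain ⟨l, rfl⟩ := (h k).1 hk
    obtain ⟨l', rfl⟩ := (h k').1 hk'
    exact ⟨l, l', hkk'⟩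
  · rintro ⟨l, l', hll'⟩
    exact ⟨f l, f l', h.apply_apply_eq_zero l, h.apply_apply_eq_zero l', hll'⟩

section Normality

variable {S M N : Type*} [Semiring S] [AddCommMonoid M] [AddCommMonoid N] [Module S M] [Module S N]
  {g : M →ₗ[S] N}

theorem kNormal_of_injective (hg : Injective g) : KNormal g :=
  fun _ _ h ↦ ⟨0, 0, map_zero g, map_zero g, congrArg (· + 0) (hg h)⟩

theorem iNormal_of_surjective (hg : Surjective g) : INormal g :=
  fun n _ _ _ ↦ hg n

theorem isNormalMap_iff_kNormal_of_surjective (hg : Surjective g) : IsNormalMap g ↔ KNormal g :=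
  and_iff_left (iNormal_of_surjective hg)

theorem iNormal_iff_subtractiveSet_range : INormal g ↔ SubtractiveSet (Set.range g) := by
  constructor
  · rintro h n _ ⟨m', hm'⟩ ⟨m, rfl⟩
    exact h n m m' hm'.symm
  · intro h n m m' hm
    exact h n (g m) ⟨m', hm.symm⟩ ⟨m, rfl⟩

theorem subtractiveSet_ker (g : M →ₗ[S] N) : SubtractiveSet (LinearMap.ker g : Set M) := by
  intro m k hmk hk
  rw [SetLike.mem_coe, LinearMap.mem_ker] at hmk hk ⊢
  rwa [map_add, hk, add_zero] at hmk

theorem kNormal_iff_map_eq_iff :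
    KNormal g ↔
      ∀ m m' : M, g m = g m' ↔ ∃ k k' : M, g k = 0 ∧ g k' = 0 ∧ m + k = m' + k' := by
  refine forall₂_congr fun m m' ↦ ⟨fun hgm ↦ ⟨hgm, ?_⟩, Iff.mp⟩
  rintro ⟨k, k', hk, hk', h⟩
  exact map_eq_map_of_add_eq_add hk hk' h

end Normality

section Exactness

variable {S L M N : Type*} [Semiring S] [AddCommMonoid L] [AddCommMonoid M] [AddCommMonoid N]
  [Module S L] [Module S M] [Module S N] {f : L →ₗ[S] M} {g : M →ₗ[S] N}

theorem iNormal_of_exact (h : Exact f g) : INormal f := by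
  rw [iNormal_iff_subtractiveSet_range, ← LinearMap.coe_range, ← h.linearMap_ker_eq]
  exact subtractiveSet_ker g

theorem kNormal_iff_map_eq_iff_of_exact (h : Exact f g) :
    KNormal g ↔ ∀ m m' : M, g m = g m' ↔ ∃ l l' : L, m + f l = m' + f l' :=
  kNormal_iff_map_eq_iff.trans <|
    forall₂_congr fun _ _ ↦ iff_congr .rfl (exists_ker_add_eq_iff_of_exact h)

end Exactness

/-- characterizations of short exact sequences of semimodules. -/
theorem stmt2 {S L M N : Type*} [Semiring S]
    [AddCommMonoid L] [AddCommMonoid M] [AddCommMonoid N]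
    [Module S L] [Module S M] [Module S N]
    (f : L →ₗ[S] M) (g : M →ₗ[S] N) :
    ((IsShortExactSeq f g ↔
        (Function.Injective f ∧ (∀ m : M, g m = 0 ↔ ∃ l : L, f l = m) ∧
          Function.Surjective g ∧
          ∀ m m' : M, g m = g m' ↔ ∃ l l' : L, m + f l = m' + f l')) ∧
      (IsShortExactSeq f g ↔
        (Function.Injective f ∧ (∀ m : M, g m = 0 ↔ ∃ l : L, f l = m) ∧
          Function.Surjective g ∧ IsNormalMap g))) ∧
    (IsShortExactSeq f g → IsNormalMap f ∧ IsNormalMap g) := by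
  refine ⟨⟨?_, ?_⟩, ?_⟩
  · exact and_congr_right fun _ ↦ and_congr_right fun hfg ↦ and_congr_right fun _ ↦
      kNormal_iff_map_eq_iff_of_exact hfg
  · exact and_congr_right fun _ ↦ and_congr_right fun _ ↦ and_congr_right fun hg ↦
      (isNormalMap_iff_kNormal_of_surjective hg).symm
  · rintro ⟨hf, hfg, hg, hk⟩
    exact ⟨⟨kNormal_of_injective hf, iNormal_of_exact hfg⟩,
      (isNormalMap_iff_kNormal_of_surjective hg).2 hk⟩
end

section
/- Let S be a commutative semiring, M an S-semimodule, and {F_λ}_{λ∈Λ} a nonempty family of S-semimodules. Then the direct sum ⊕_{λ∈Λ} F_λ is M-i-flat (respectively M-e-flat, respectively M-m-flat) if and only if F_λ is M-i-flat (respectively M-e-flat, respectively M-m-flat) for every λ ∈ Λ. -/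
open TensorProduct

/-!
Tensoring distributes over direct sums, naturally in the other factor, so `id ⊗ f` on
`(⨁ i, F i) ⊗ L` is conjugate to the direct sum of the maps `id ⊗ f` on the `F i ⊗ L`. A direct sum
of maps is injective iff its components are. Its image consists of the families lying
componentwise in the images, and the image of the `i`-th component is the preimage of the total
image under the `i`-th inclusion; since preimages and intersections of subtractive sets are
subtractive, subtractivity of the image is componentwise too.
-/

section SubtractiveSet

variable {M N : Type*} [AddCommMonoid M] [AddCommMonoid N]

theorem SubtractiveSet.preimage {G : Type*} [FunLike G M N] [AddHomClass G M N] {T : Set N}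
    (hT : SubtractiveSet T) (g : G) : SubtractiveSet (g ⁻¹' T) := by
  intro m l hml hl
  rw [Set.mem_preimage, map_add] at hml
  exact hT _ _ hml hl

theorem SubtractiveSet.iInter {κ : Sort*} {T : κ → Set M} (hT : ∀ i, SubtractiveSet (T i)) :
    SubtractiveSet (⋂ i, T i) := by
  intro m l hml hl
  rw [Set.mem_iInter] at hml hl ⊢
  exact fun i => hT i m l (hml i) (hl i)

theorem subtractiveSet_image_addEquiv_iff (e : M ≃+ N) {T : Set M} :
    SubtractiveSet (e '' T) ↔ SubtractiveSet T := by
  constructor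
  · intro h
    rw [← Set.preimage_image_eq T e.injective]
    exact h.preimage e
  · intro h
    rw [show e '' T = e.symm ⁻¹' T from e.toEquiv.image_eq_preimage_symm T]
    exact h.preimage e.symm

end SubtractiveSet

section DirectSumMap

open DirectSum

variable {R ι : Type*} [Semiring R] {A B : ι → Type*}
  [∀ i, AddCommMonoid (A i)] [∀ i, Module R (A i)]
  [∀ i, AddCommMonoid (B i)] [∀ i, Module R (B i)] (f : ∀ i, A i →ₗ[R] B i)

theorem range_lmap_eq_iInter_preimage_component :
    Set.range (lmap f) = ⋂ i, component R ι B i ⁻¹' Set.range (f i) := by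
  ext y
  simpa [Submodule.mem_pi, apply_eq_component R] using SetLike.ext_iff.mp (range_lmap f) y

theorem lof_preimage_range_lmap [DecidableEq ι] (i : ι) :
    lof R ι B i ⁻¹' Set.range (lmap f) = Set.range (f i) := by
  ext y
  constructor
  · rintro ⟨x, hx⟩
    exact ⟨x i, by rw [← lmap_apply, hx, lof_apply]⟩
  · rintro ⟨x, rfl⟩
    exact ⟨lof R ι A i x, lmap_lof f i x⟩

theorem subtractiveSet_range_lmap_iff :
    SubtractiveSet (Set.range (lmap f)) ↔ ∀ i, SubtractiveSet (Set.range (f i)) := by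
  classical
  constructor
  · intro h i
    rw [← lof_preimage_range_lmap f i]
    exact h.preimage _
  · intro h
    rw [range_lmap_eq_iInter_preimage_component]
    exact .iInter fun i => (h i).preimage _

end DirectSumMap

section TensorDirectSum

open DirectSum

variable {S ι : Type*} [CommSemiring S]
  (F : ι → Type*) [∀ i, AddCommMonoid (F i)] [∀ i, Module S (F i)]
  {L M : Type*} [AddCommMonoid L] [AddCommMonoid M] [Module S L] [Module S M] (f : L →ₗ[S] M)

theorem lTensor_directSum_eq_conj_lmap [DecidableEq ι] :
    f.lTensor (⨁ i, F i) = (directSumLeft S S F M).symm.toLinearMap ∘ₗ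
      (lmap fun i => f.lTensor (F i)) ∘ₗ (directSumLeft S S F L).toLinearMap := by
  ext
  simp

theorem lTensor_directSum_injective_iff :
    Function.Injective (f.lTensor (⨁ i, F i)) ↔ ∀ i, Function.Injective (f.lTensor (F i)) := by
  classical
  rw [lTensor_directSum_eq_conj_lmap, LinearMap.coe_comp, LinearMap.coe_comp, LinearEquiv.coe_coe,
    LinearEquiv.coe_coe, EquivLike.comp_injective, EquivLike.injective_comp, lmap_injective]

theorem subtractiveSet_range_lTensor_directSum_iff :
    SubtractiveSet (Set.range (f.lTensor (⨁ i, F i))) ↔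
      ∀ i, SubtractiveSet (Set.range (f.lTensor (F i))) := by
  classical
  have range_eq_image : Set.range (f.lTensor (⨁ i, F i)) =
      (directSumLeft S S F M).symm.toAddEquiv '' Set.range (lmap fun i => f.lTensor (F i)) := by
    rw [lTensor_directSum_eq_conj_lmap, LinearMap.coe_comp, LinearMap.coe_comp,
      LinearEquiv.coe_coe, LinearEquiv.coe_coe, Set.range_comp, EquivLike.range_comp]
    rfl
  rw [range_eq_image, subtractiveSet_image_addEquiv_iff, subtractiveSet_range_lmap_iff]

end TensorDirectSum

section Flat

open DirectSum

variable {S M ι : Type*} [CommSemiring S] [AddCommMonoid M] [Module S M]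
  {F : ι → Type*} [∀ i, AddCommMonoid (F i)] [∀ i, Module S (F i)]

theorem MIFlat.directSum_iff : MIFlat S (⨁ i, F i) M ↔ ∀ i, MIFlat S (F i) M := by
  simp only [MIFlat, lTensor_directSum_injective_iff]
  exact ⟨fun h i L hL => h L hL i, fun h L hL i => h i L hL⟩

theorem MEFlat.directSum_iff : MEFlat S (⨁ i, F i) M ↔ ∀ i, MEFlat S (F i) M := by
  simp only [MEFlat, lTensor_directSum_injective_iff, subtractiveSet_range_lTensor_directSum_iff,
    ← forall_and]
  exact ⟨fun h i L hL => h L hL i, fun h L hL i => h i L hL⟩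

theorem MMFlat.directSum_iff : MMFlat S (⨁ i, F i) M ↔ ∀ i, MMFlat S (F i) M := by
  simp only [MMFlat, lTensor_directSum_injective_iff]
  exact forall_comm

end Flat

open DirectSum in
/-- a direct sum is `M`-i-flat (resp. `M`-e-flat, `M`-m-flat) iff every
summand is. -/
theorem stmt11 {S M : Type*} [CommSemiring S] [AddCommMonoid M] [Module S M]
    {ι : Type*} [DecidableEq ι] [Nonempty ι]
    (F : ι → Type*) [∀ i, AddCommMonoid (F i)] [∀ i, Module S (F i)] :
    (MIFlat S (⨁ i, F i) M ↔ ∀ i, MIFlat S (F i) M) ∧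
    (MEFlat S (⨁ i, F i) M ↔ ∀ i, MEFlat S (F i) M) ∧
    (MMFlat S (⨁ i, F i) M ↔ ∀ i, MMFlat S (F i) M) :=
  ⟨MIFlat.directSum_iff, MEFlat.directSum_iff, MMFlat.directSum_iff⟩
end
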